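/- arXiv:2008.03271 — 2 statements merged into one kernel-verified Lean document; each statement's English description precedes it below -/
import Mathlib

section
/- For every real y > 0, the Kullback–Leibler divergence between the Gaussian density with mean log y and variance 1/y and the log-Gamma density with parameters y and 1 has the closed form D(f_Normal(·|log y, y⁻¹) ‖ f_logGamma(·|y,1)) = log(Γ(y)/√(2π/y)) − y·log y + y·e^(1/(2y)) − 1/2. -/
open Real MeasureTheory Filter

/-- Gaussian density with mean `m` and variance `v`. -/
noncomputable def fNormal (m v ξ : ℝ) : ℝ :=
  (Real.sqrt (2 * Real.pi * v))⁻¹ * Real.exp (-(ξ - m) ^ 2 / (2 * v))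

/-- log-Gamma density with parameters `r` and `s`. -/
noncomputable def fLogGamma (r s ξ : ℝ) : ℝ :=
  (Real.Gamma r * s ^ r)⁻¹ * Real.exp (r * ξ - Real.exp ξ / s)

/-- Kullback–Leibler divergence between densities `f` and `g` on `ℝ`. -/
noncomputable def KL (f g : ℝ → ℝ) : ℝ :=
  ∫ ξ : ℝ, f ξ * Real.log (f ξ / g ξ)

/-!
The log-likelihood ratio `log (f_Normal ξ / f_logGamma ξ)` is a linear combination of the functions
`1`, `(ξ - m) ^ 2`, `ξ` and `e ^ ξ`. Under the Gaussian law with mean `m` and variance `v` these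
have expectations `1`, `v`, `m` and `e ^ (m + v / 2)`, the last one being the moment generating
function at `1`.
-/

open ProbabilityTheory
open scoped NNReal

section GaussianMoments

variable (μ : ℝ) (v : ℝ≥0)

lemma integrable_sub_mean_sq_gaussianReal :
    Integrable (fun x ↦ (x - μ) ^ 2) (gaussianReal μ v) :=
  ((memLp_id_gaussianReal' 2 (by simp)).sub (memLp_const μ)).integrable_sq

lemma integral_sub_mean_sq_gaussianReal : ∫ x, (x - μ) ^ 2 ∂gaussianReal μ v = v := by
  simpa [variance_eq_integral measurable_id'.aemeasurable] using
    variance_fun_id_gaussianReal (μ := μ) (v := v)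

lemma integrable_id_gaussianReal : Integrable (fun x ↦ x) (gaussianReal μ v) :=
  (memLp_id_gaussianReal 1).integrable le_rfl

lemma integrable_exp_gaussianReal : Integrable rexp (gaussianReal μ v) := by
  simpa using integrable_exp_mul_gaussianReal (μ := μ) (v := v) 1

lemma integral_exp_gaussianReal : ∫ x, rexp x ∂gaussianReal μ v = rexp (μ + v / 2) := by
  simpa [mgf] using congrFun (mgf_fun_id_gaussianReal (μ := μ) (v := v)) 1

end GaussianMoments

lemma fNormal_eq_gaussianPDFReal (m : ℝ) (v : ℝ≥0) : fNormal m v = gaussianPDFReal m v := rfl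

lemma KL_fNormal_eq_integral_gaussianReal (m : ℝ) {v : ℝ≥0} (hv : v ≠ 0) (g : ℝ → ℝ) :
    KL (fNormal m v) g = ∫ ξ, log (fNormal m v ξ / g ξ) ∂gaussianReal m v := by
  simp only [KL, integral_gaussianReal_eq_integral_smul hv, fNormal_eq_gaussianPDFReal, smul_eq_mul]

lemma fNormal_pos (m : ℝ) {v : ℝ} (hv : 0 < v) (ξ : ℝ) : 0 < fNormal m v ξ := by
  unfold fNormal
  positivity

lemma log_fNormal (m : ℝ) {v : ℝ} (hv : 0 < v) (ξ : ℝ) :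
    log (fNormal m v ξ) = -log √(2 * π * v) - (ξ - m) ^ 2 / (2 * v) := by
  rw [fNormal, log_mul (by positivity) (exp_ne_zero _), log_inv, log_exp]
  ring

section LogGamma

variable {r s : ℝ} (hr : 0 < r) (hs : 0 < s) (ξ : ℝ)
include hr hs

lemma fLogGamma_pos : 0 < fLogGamma r s ξ := by
  have := Gamma_pos_of_pos hr
  unfold fLogGamma
  positivity

lemma log_fLogGamma :
    log (fLogGamma r s ξ) = -log (Gamma r * s ^ r) + (r * ξ - rexp ξ / s) := by
  have := Gamma_pos_of_pos hr
  rw [fLogGamma, log_mul (by positivity) (exp_ne_zero _), log_inv, log_exp]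

lemma log_fNormal_div_fLogGamma (m : ℝ) {v : ℝ} (hv : 0 < v) :
    log (fNormal m v ξ / fLogGamma r s ξ) =
      log (Gamma r * s ^ r / √(2 * π * v)) - (ξ - m) ^ 2 / (2 * v) - r * ξ + rexp ξ / s := by
  have := Gamma_pos_of_pos hr
  rw [log_div (fNormal_pos m hv ξ).ne' (fLogGamma_pos hr hs ξ).ne', log_fNormal m hv,
    log_fLogGamma hr hs, log_div (by positivity) (by positivity)]
  ring

end LogGamma

theorem kl_normal_logGamma_closed_form_general (m : ℝ) {v r s : ℝ} (hv : 0 < v) (hr : 0 < r)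
    (hs : 0 < s) :
    KL (fNormal m v) (fLogGamma r s) =
      log (Gamma r * s ^ r / √(2 * π * v)) - r * m + rexp (m + v / 2) / s - 1 / 2 := by
  lift v to ℝ≥0 using hv.le
  have hsq := (integrable_sub_mean_sq_gaussianReal m v).div_const (2 * v)
  have hid := (integrable_id_gaussianReal m v).const_mul r
  have hexp := (integrable_exp_gaussianReal m v).div_const s
  calc KL (fNormal m v) (fLogGamma r s)
    _ = ∫ ξ, (log (Gamma r * s ^ r / √(2 * π * v)) - (ξ - m) ^ 2 / (2 * v) - r * ξ + rexp ξ / s)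
          ∂gaussianReal m v := by
      simp only [KL_fNormal_eq_integral_gaussianReal m (NNReal.coe_pos.mp hv).ne',
        log_fNormal_div_fLogGamma hr hs _ m hv]
    _ = log (Gamma r * s ^ r / √(2 * π * v)) - v / (2 * v) - r * m + rexp (m + v / 2) / s := by
      rw [integral_add (by fun_prop) hexp, integral_sub (by fun_prop) hid,
        integral_sub (by fun_prop) hsq, integral_div, integral_div, integral_const_mul,
        integral_sub_mean_sq_gaussianReal, integral_id_gaussianReal, integral_exp_gaussianReal]
      simp
    _ = log (Gamma r * s ^ r / √(2 * π * v)) - r * m + rexp (m + v / 2) / s - 1 / 2 := by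
      field_simp
      ring

theorem kl_normal_logGamma_closed_form (y : ℝ) (hy : 0 < y) :
    KL (fNormal (Real.log y) y⁻¹) (fLogGamma y 1) =
      Real.log (Real.Gamma y / Real.sqrt (2 * Real.pi / y)) - y * Real.log y +
        y * Real.exp (1 / (2 * y)) - 1 / 2 := by
  rw [kl_normal_logGamma_closed_form_general (log y) (inv_pos.mpr hy) hy one_pos, exp_add,
    exp_log hy, one_rpow, mul_one, div_one, ← div_eq_mul_inv, inv_div_left, one_div (2 * y)]
end

section
/- Define G(y) = log Γ(y) + (1/2)·log(y/(2π)) − y·log y + y·e^(1/(2y)) − 1/2 for y > 0, where Γ is the real Gamma function. Then G(y) = 5/(24y) + O(y⁻²) as y → ∞; precisely, there exist constants C > 0 and Y₀ > 0 such that for all real y ≥ Y₀, |G(y) − 5/(24y)| ≤ C/y². -/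
open Real

/-- Closed-form expression for the KL divergence between the `N(log y, 1/y)` density
and the log-Gamma density with parameters `y` and `1`. -/
noncomputable def G (y : ℝ) : ℝ :=
  Real.log (Real.Gamma y) + (1 / 2) * Real.log (y / (2 * Real.pi)) - y * Real.log y +
    y * Real.exp (1 / (2 * y)) - 1 / 2

/-! Let `μ` be the remainder in Stirling's formula for `log Γ`. Then
`G y = μ(y) + (y exp (1 / (2y)) - y - 1/2)`. The exponential part is `1 / (8y) + O(y⁻²)` by Taylor
expansion. Moreover `μ(y) = 1 / (12y) + O(y⁻²)`, because `μ` tends to `0` along `y, y + 1, y + 2, …`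
and `μ(y) - μ(y + 1) = ∑_{k ≥ 1} t ^ (2k) / (2k + 1)` with `t = 1 / (2y + 1)`: keeping only the
first term of this series, or replacing each `2k + 1` by `3`, bounds it below and above by the
telescoping differences of `1 / (6 (2y + 1))` and `1 / (12y)`. -/

open Filter Topology

/-- The remainder `μ(y)` in Stirling's formula
`log Γ(y) = (y - 1/2) log y - y + log (2π) / 2 + μ(y)`, also known as Binet's function. Its
estimates yield those of `G`. -/
noncomputable def stirlingRemainder (y : ℝ) : ℝ :=
  log (Gamma y) - ((y - 1 / 2) * log y - y + log (2 * π) / 2)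

theorem apply_zero_le_of_sub_succ_le {α : Type*} [AddCommGroup α] [PartialOrder α]
    [IsOrderedAddMonoid α] [TopologicalSpace α] [ContinuousSub α] [OrderClosedTopology α]
    {u v : ℕ → α} {a : α} (h : ∀ n, u n - u (n + 1) ≤ v n - v (n + 1))
    (hu : Tendsto u atTop (𝓝 a)) (hv : Tendsto v atTop (𝓝 a)) : u 0 ≤ v 0 := by
  have hmono : Monotone (fun n => u n - v n) :=
    monotone_nat_of_le_succ fun n => sub_le_sub_iff.2 <| by
      simpa only [add_comm] using sub_le_sub_iff.1 (h n)
  have hlim : Tendsto (fun n => u n - v n) atTop (𝓝 0) := by simpa using hu.sub hv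
  exact sub_nonpos.1 (hmono.ge_of_tendsto hlim 0)

theorem log_Gamma_add_one {y : ℝ} (hy : 0 < y) :
    log (Gamma (y + 1)) = log (Gamma y) + log y := by
  rw [Gamma_add_one hy.ne', log_mul hy.ne' (Gamma_pos_of_pos hy).ne', add_comm]

theorem stirlingRemainder_sub_add_one {y : ℝ} (hy : 0 < y) :
    stirlingRemainder y - stirlingRemainder (y + 1) = (y + 1 / 2) * log (1 + y⁻¹) - 1 := by
  have hlog : log (1 + y⁻¹) = log (y + 1) - log y := by
    rw [← log_div (by positivity) hy.ne', add_div, div_self hy.ne', one_div]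
  simp only [stirlingRemainder, log_Gamma_add_one hy, hlog]
  ring

theorem hasSum_stirlingRemainder_sub_add_one {y : ℝ} (hy : 0 < y) :
    HasSum (fun k : ℕ => (1 / (2 * y + 1)) ^ (2 * (k + 1)) / (2 * k + 3))
      (stirlingRemainder y - stirlingRemainder (y + 1)) := by
  have hseries := (hasSum_nat_add_iff' 1).2 ((hasSum_log_one_add_inv hy).mul_left (y + 1 / 2))
  convert! hseries using 1
  · ext k
    rw [pow_succ _ (2 * (k + 1))]
    push_cast
    field
  · simp only [stirlingRemainder_sub_add_one hy, Finset.sum_range_one, Nat.cast_zero, mul_zero,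
      zero_add, pow_one]
    field

theorem one_div_le_stirlingRemainder_sub_add_one {y : ℝ} (hy : 0 < y) :
    1 / (3 * (2 * y + 1) ^ 2) ≤ stirlingRemainder y - stirlingRemainder (y + 1) :=
  calc
    _ = (1 / (2 * y + 1)) ^ (2 * (0 + 1)) / (2 * (0 : ℕ) + 3) := by
      push_cast
      field
    _ ≤ _ := le_hasSum (hasSum_stirlingRemainder_sub_add_one hy) 0 fun k _ => by positivity

theorem stirlingRemainder_sub_add_one_le {y : ℝ} (hy : 0 < y) :
    stirlingRemainder y - stirlingRemainder (y + 1) ≤ 1 / (12 * y) - 1 / (12 * (y + 1)) := by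
  set t := 1 / (2 * y + 1) with ht
  have ht_pos : 0 < t := by positivity
  have ht_lt_one : t < 1 := by
    rw [ht, div_lt_one (by positivity)]
    linarith
  have hgeom : HasSum (fun k : ℕ => t ^ 2 / 3 * (t ^ 2) ^ k) (t ^ 2 / 3 * (1 - t ^ 2)⁻¹) :=
    (hasSum_geometric_of_lt_one (sq_nonneg t)
      (pow_lt_one₀ ht_pos.le ht_lt_one two_ne_zero)).mul_left _
  have hterm (k : ℕ) : t ^ (2 * (k + 1)) / (2 * k + 3) ≤ t ^ 2 / 3 * (t ^ 2) ^ k :=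
    calc
      t ^ (2 * (k + 1)) / (2 * k + 3) ≤ t ^ (2 * (k + 1)) / 3 := by
        gcongr
        linarith [k.cast_nonneg (α := ℝ)]
      _ = t ^ 2 / 3 * (t ^ 2) ^ k := by ring
  have hsum : t ^ 2 / 3 * (1 - t ^ 2)⁻¹ = 1 / (12 * y) - 1 / (12 * (y + 1)) := by
    have hsub : 1 - t ^ 2 = 4 * y * (y + 1) / (2 * y + 1) ^ 2 := by
      rw [ht]
      field
    rw [hsub, ht]
    field
  exact (hasSum_le hterm (hasSum_stirlingRemainder_sub_add_one hy) hgeom).trans_eq hsum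

theorem stirlingRemainder_add_nat_eq {x : ℝ} (hx : 0 < x) {n : ℕ} (hn : n ≠ 0) :
    stirlingRemainder (x + (n + 1 : ℕ)) =
      (log (Gamma x) - BohrMollerup.logGammaSeq x n) + (log (Stirling.stirlingSeq n) - log √π)
        + (x + 1 - n * log (1 + (x + 1) / n)) - (x + 1 / 2) * log (1 + (x + 1) / n) := by
  have hn_pos : (0 : ℝ) < n := by positivity
  have hGamma : log (Gamma (x + (n + 1 : ℕ))) =
      log (Gamma x) + ∑ m ∈ Finset.range (n + 1), log (x + m) :=
    BohrMollerup.f_add_nat_eq (f := fun y => log (Gamma y)) log_Gamma_add_one hx (n + 1)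
  have hlog : log (1 + (x + 1) / n) = log (x + (n + 1 : ℕ)) - log n := by
    rw [← log_div (by positivity) hn_pos.ne']
    congr 1
    push_cast
    field
  rw [stirlingRemainder, hGamma, hlog, BohrMollerup.logGammaSeq, Stirling.log_stirlingSeq_formula,
    log_div hn_pos.ne' (exp_pos 1).ne', log_exp, log_mul two_ne_zero hn_pos.ne',
    log_mul two_ne_zero pi_ne_zero, log_sqrt pi_pos.le]
  push_cast
  ring

theorem tendsto_stirlingRemainder_add_nat {x : ℝ} (hx : 0 < x) :
    Tendsto (fun n : ℕ => stirlingRemainder (x + n)) atTop (𝓝 0) := by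
  rw [← tendsto_add_atTop_iff_nat 1]
  have hGamma := (BohrMollerup.tendsto_log_gamma hx).const_sub (log (Gamma x))
  have hStirling := (Stirling.tendsto_stirlingSeq_sqrt_pi.log (by positivity)).sub_const (log √π)
  have hmul_log : Tendsto (fun n : ℕ => x + 1 - n * log (1 + (x + 1) / n)) atTop
      (𝓝 (x + 1 - (x + 1))) :=
    ((tendsto_mul_log_one_add_div_atTop (x + 1)).comp tendsto_natCast_atTop_atTop).const_sub _
  have hlog : Tendsto (fun n : ℕ => (x + 1 / 2) * log (1 + (x + 1) / n)) atTop
      (𝓝 ((x + 1 / 2) * log (1 + 0))) :=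
    (((tendsto_const_div_atTop_nhds_zero_nat (x + 1)).const_add 1).log (by norm_num)).const_mul _
  have hlim := ((hGamma.add hStirling).add hmul_log).sub hlog
  simp only [sub_self, add_zero, log_one, mul_zero] at hlim
  refine hlim.congr' ?_
  filter_upwards [eventually_ne_atTop 0] with n hn
  exact (stirlingRemainder_add_nat_eq hx hn).symm

theorem stirlingRemainder_le {x : ℝ} (hx : 0 < x) : stirlingRemainder x ≤ 1 / (12 * x) := by
  have hlim : Tendsto (fun n : ℕ => 1 / (12 * (x + n))) atTop (𝓝 0) :=
    tendsto_const_nhds.div_atTop <| (tendsto_atTop_add_const_left _ x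
      tendsto_natCast_atTop_atTop).const_mul_atTop (by norm_num)
  have hstep (n : ℕ) : stirlingRemainder (x + n) - stirlingRemainder (x + (n + 1 : ℕ)) ≤
      1 / (12 * (x + n)) - 1 / (12 * (x + (n + 1 : ℕ))) := by
    simpa only [Nat.cast_add_one, add_assoc] using
      stirlingRemainder_sub_add_one_le (y := x + n) (by positivity)
  simpa using apply_zero_le_of_sub_succ_le hstep (tendsto_stirlingRemainder_add_nat hx) hlim

theorem one_div_le_stirlingRemainder {x : ℝ} (hx : 0 < x) :
    1 / (6 * (2 * x + 1)) ≤ stirlingRemainder x := by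
  have hlim : Tendsto (fun n : ℕ => 1 / (6 * (2 * (x + n) + 1))) atTop (𝓝 0) :=
    tendsto_const_nhds.div_atTop <| (tendsto_atTop_add_const_right _ 1 <|
      (tendsto_atTop_add_const_left _ x tendsto_natCast_atTop_atTop).const_mul_atTop
        (by norm_num)).const_mul_atTop (by norm_num)
  have htelescope {y : ℝ} (hy : 0 < y) :
      1 / (6 * (2 * y + 1)) - 1 / (6 * (2 * (y + 1) + 1)) ≤ 1 / (3 * (2 * y + 1) ^ 2) :=
    calc
      _ = 1 / (3 * ((2 * y + 1) * (2 * y + 3))) := by field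
      _ ≤ _ := by
        rw [sq]
        gcongr
        norm_num
  have hstep (n : ℕ) : 1 / (6 * (2 * (x + n) + 1)) - 1 / (6 * (2 * (x + (n + 1 : ℕ)) + 1)) ≤
      stirlingRemainder (x + n) - stirlingRemainder (x + (n + 1 : ℕ)) := by
    have hy : 0 < x + n := by positivity
    simpa only [Nat.cast_add_one, add_assoc] using
      (htelescope hy).trans (one_div_le_stirlingRemainder_sub_add_one hy)
  simpa using apply_zero_le_of_sub_succ_le hstep hlim (tendsto_stirlingRemainder_add_nat hx)

theorem abs_stirlingRemainder_sub_le {x : ℝ} (hx : 0 < x) :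
    |stirlingRemainder x - 1 / (12 * x)| ≤ 1 / (24 * x ^ 2) := by
  have hgap : 1 / (12 * x) - 1 / (6 * (2 * x + 1)) ≤ 1 / (24 * x ^ 2) :=
    calc
      _ = 1 / (12 * x * (2 * x + 1)) := by field
      _ ≤ 1 / (12 * x * (2 * x)) := by
        gcongr
        linarith
      _ = 1 / (24 * x ^ 2) := by ring
  rw [abs_of_nonpos (sub_nonpos.2 (stirlingRemainder_le hx))]
  linarith [one_div_le_stirlingRemainder hx]

theorem abs_exp_sub_quadratic_le {x : ℝ} (hx : |x| ≤ 1) :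
    |exp x - (1 + x + x ^ 2 / 2)| ≤ 2 / 9 * |x| ^ 3 :=
  calc
    _ = |exp x - ∑ m ∈ Finset.range 3, x ^ m / m.factorial| := by
      simp [Finset.sum_range_succ, Nat.factorial]
    _ ≤ |x| ^ 3 * ((Nat.succ 3 : ℕ) / (Nat.factorial 3 * (3 : ℕ))) := exp_bound hx three_pos
    _ = 2 / 9 * |x| ^ 3 := by
      norm_num [Nat.factorial]
      ring

theorem abs_mul_exp_one_div_two_mul_sub_le {y : ℝ} (hy : 1 / 2 ≤ y) :
    |y * exp (1 / (2 * y)) - y - 1 / 2 - 1 / (8 * y)| ≤ 1 / (36 * y ^ 2) := by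
  have hy_pos : 0 < y := by linarith
  have hx_abs : |1 / (2 * y)| = 1 / (2 * y) := abs_of_pos (by positivity)
  have hx_le : |1 / (2 * y)| ≤ 1 := by
    rw [hx_abs, div_le_one (by positivity)]
    linarith
  calc
    _ = |y * (exp (1 / (2 * y)) - (1 + 1 / (2 * y) + (1 / (2 * y)) ^ 2 / 2))| := by
      congr 1
      field
    _ = y * |exp (1 / (2 * y)) - (1 + 1 / (2 * y) + (1 / (2 * y)) ^ 2 / 2)| := by
      rw [abs_mul, abs_of_pos hy_pos]
    _ ≤ y * (2 / 9 * (1 / (2 * y)) ^ 3) := by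
      gcongr
      exact (abs_exp_sub_quadratic_le hx_le).trans_eq (by rw [hx_abs])
    _ = 1 / (36 * y ^ 2) := by field

theorem G_eq_stirlingRemainder_add {y : ℝ} (hy : y ≠ 0) :
    G y = stirlingRemainder y + (y * exp (1 / (2 * y)) - y - 1 / 2) := by
  rw [G, stirlingRemainder, log_div hy two_pi_pos.ne']
  ring

theorem G_asymptotic :
    ∃ C > (0 : ℝ), ∃ Y₀ > (0 : ℝ), ∀ y : ℝ, Y₀ ≤ y →
      |G y - 5 / (24 * y)| ≤ C / y ^ 2 := by
  refine ⟨5 / 72, by norm_num, 1 / 2, by norm_num, fun y hy => ?_⟩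
  have hy_pos : 0 < y := by linarith
  calc
    |G y - 5 / (24 * y)|
      = |(stirlingRemainder y - 1 / (12 * y)) +
          (y * exp (1 / (2 * y)) - y - 1 / 2 - 1 / (8 * y))| := by
      rw [G_eq_stirlingRemainder_add hy_pos.ne']
      congr 1
      ring
    _ ≤ 1 / (24 * y ^ 2) + 1 / (36 * y ^ 2) :=
      (abs_add_le _ _).trans <| add_le_add (abs_stirlingRemainder_sub_le hy_pos)
        (abs_mul_exp_one_div_two_mul_sub_le hy)
    _ = 5 / 72 / y ^ 2 := by ring
end
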